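/- arXiv:2001.06994 — 2 statements merged into one kernel-verified Lean document; each statement's English description precedes it below -/
import Mathlib

section
/- Let p be a prime and A ⊆ GF(p) with |A| ≥ 2 and |A|² < p. Then there exist a, b, c, d ∈ A with a ≠ b and c ≠ d such that the dilate sumset (a−b)·A + (c−d)·A = {(a−b)α + (c−d)β : α, β ∈ A} has size at least |A|³/(2|A| − 1). -/
/-!
The proof combines an averaging argument with a bound on the number of directions determined by
`A × A`.  Write `n = |A|` and let `Q` be the set of ratios `(a - b) / (c - d)` with `a ≠ b`,
`c ≠ d` in `A`.

*Averaging* (`card_sq_le_card_mul_collisions`).  By Cauchy-Schwarz `|λA + μA|` is at least `n ^ 4`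
divided by the number of solutions of `λα + μβ = λα' + μβ'` in `A`.  Besides the `n ^ 2` trivial
solutions, these correspond to the representations of `λ / μ` as a ratio of nonzero differences.
There are `(n (n - 1)) ^ 2` representations in total, so if `|Q| ≥ n (n - 1)`, some `λ / μ ∈ Q` has
at most `n (n - 1)` of them, and then `|λA + μA| ≥ n ^ 4 / (n ^ 2 + n (n - 1)) = n ^ 3 / (2 n - 1)`.

*Directions* (`card_mul_pred_le_card_ratios`).  The bound `|Q| ≥ n (n - 1)` is proved with the
Rédei polynomial `R(X, Y) = ∏ (X - (b + a Y))` over `(a, b) ∈ A × A`.  Let `r` be the remainder of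
`X ^ p` modulo `R`, as polynomials in `X`.  Since the total degree of `R` equals its degree in `X`, the
coefficient of `X ^ j` in `r` has degree at most `p - j` in `Y`.  If `Y = m` is a slope for which
`(a, b) ↦ b + a m` is injective on `A × A`, then `R(X, m)` divides `X ^ p - X` and so `r(X, m) = X`.
All `m` outside `-Q ∪ {0}` are such slopes, and counting zeros shows that `r` has degree at most
`|Q| + 1` in `X`.  At `Y = 0` one gets `∏ (X - b) ^ n ∣ X ^ p - r(X, 0)`; differentiating,
`∏ (X - b) ^ (n - 1)` divides the derivative of `r(X, 0)`, which is nonzero and of degree at most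
`|Q|`.
-/

/-! ### Total degree of bivariate polynomials and remainders -/

open Polynomial in
/-- A bivariate polynomial, seen as a polynomial in `X` with coefficients in `F[Y]`, has total
degree at most `d`. -/
def WeightLE {F : Type*} [Field F] (d : ℕ) (P : F[X][X]) : Prop :=
  ∀ j i, d < i + j → (P.coeff j).coeff i = 0

open Polynomial in
lemma WeightLE.mul {F : Type*} [Field F] {d e : ℕ} {P S : F[X][X]}
    (hP : WeightLE d P) (hS : WeightLE e S) : WeightLE (d + e) (P * S) := by
  intro j i hij
  rw [coeff_mul, finsetSum_coeff]
  refine Finset.sum_eq_zero fun x hx => ?_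
  rw [coeff_mul]
  refine Finset.sum_eq_zero fun y hy => ?_
  rw [Finset.HasAntidiagonal.mem_antidiagonal] at hx hy
  by_cases h : d < y.1 + x.1
  · rw [hP _ _ h, zero_mul]
  · rw [hS x.2 y.2 (by omega), mul_zero]

open Polynomial in
lemma WeightLE.sub {F : Type*} [Field F] {d : ℕ} {P S : F[X][X]}
    (hP : WeightLE d P) (hS : WeightLE d S) : WeightLE d (P - S) := by
  intro j i hij
  rw [coeff_sub, coeff_sub, hP j i hij, hS j i hij, sub_zero]

open Polynomial in
lemma weightLE_one {F : Type*} [Field F] : WeightLE 0 (1 : F[X][X]) := by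
  intro j i hij
  rw [coeff_one]
  split_ifs with h
  · rw [coeff_one, if_neg (by omega)]
  · simp

open Polynomial in
lemma weightLE_X {F : Type*} [Field F] : WeightLE 1 (X : F[X][X]) := by
  intro j i hij
  rw [coeff_X]
  split_ifs with h
  · rw [coeff_one, if_neg (by omega)]
  · simp

open Polynomial in
lemma weightLE_C {F : Type*} [Field F] {d : ℕ} {q : F[X]} (hq : ∀ i, d < i → q.coeff i = 0) :
    WeightLE d (C q) := by
  intro j i hij
  rw [coeff_C]
  split_ifs with h
  · exact hq i (by omega)
  · simp

open Polynomial in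
lemma weightLE_prod {F ι : Type*} [Field F] (s : Finset ι) (f : ι → F[X][X])
    (hf : ∀ x ∈ s, WeightLE 1 (f x)) : WeightLE s.card (∏ x ∈ s, f x) := by
  classical
  induction s using Finset.induction_on with
  | empty => simpa using weightLE_one
  | insert a s ha ih =>
    rw [Finset.prod_insert ha, Finset.card_insert_of_notMem ha, add_comm]
    exact (hf a (by simp)).mul (ih fun x hx => hf x (by simp [hx]))

open Polynomial in
/-- Reducing `X ^ d` modulo a monic polynomial whose total degree equals its degree in `X` does not
raise the total degree. -/
lemma exists_rem_weightLE {F : Type*} [Field F] {k : ℕ} (hk : 0 < k) {R : F[X][X]}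
    (hR : R.Monic) (hdeg : R.natDegree = k) (hw : WeightLE k R) (d : ℕ) :
    ∃ r : F[X][X], (∀ j, k ≤ j → r.coeff j = 0) ∧ WeightLE d r ∧ R ∣ X ^ d - r := by
  induction d with
  | zero =>
    refine ⟨1, fun j hj => ?_, weightLE_one, by simp⟩
    rw [coeff_one, if_neg (by omega)]
  | succ d ih =>
    obtain ⟨r, h1, h2, s, h3⟩ := ih
    -- `X * r` has degree at most `k` in `X`; a multiple of `R` cancels its top coefficient.
    refine ⟨X * r - C (r.coeff (k - 1)) * R, fun j hj => ?_, ?_, ?_⟩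
    · obtain ⟨j, rfl⟩ : ∃ j', j = j' + 1 := ⟨j - 1, by omega⟩
      rw [coeff_sub, coeff_X_mul, coeff_C_mul]
      rcases eq_or_lt_of_le hj with h | h
      · have : R.coeff (j + 1) = 1 := by
          rw [← h, ← hdeg]; exact hR
        rw [this, h]; simp
      · rw [h1 j (by omega), coeff_eq_zero_of_natDegree_lt (p := R) (by omega)]; simp
    · by_cases hd : d + 1 < k
      · have h0 : r.coeff (k - 1) = 0 := by
          ext i
          exact h2 _ _ (by omega)
        rw [h0]
        simpa [add_comm] using weightLE_X.mul h2
      · refine WeightLE.sub (by simpa [add_comm] using weightLE_X.mul h2) ?_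
        have hC : WeightLE (d + 1 - k) (C (r.coeff (k - 1))) :=
          weightLE_C fun i hi => h2 _ _ (by omega)
        have := hC.mul hw
        rwa [Nat.sub_add_cancel (by omega)] at this
    · refine ⟨X * s + C (r.coeff (k - 1)), ?_⟩
      rw [pow_succ]
      linear_combination X * h3

/-! ### Directions determined by a Cartesian square -/

/-- The nonzero ratios of differences of elements of `A`, that is the slopes of the lines through
two points of `A × A`, the horizontal and vertical ones excepted. -/
def ratios {F : Type*} [Field F] [DecidableEq F] (A : Finset F) : Finset F :=
  (A.offDiag ×ˢ A.offDiag).image fun x => (x.1.1 - x.1.2) / (x.2.1 - x.2.2)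

open Polynomial in
/-- At a slope `m` separating the points of `A × A`, the polynomial `X ^ p` reduces to `X`. -/
lemma rem_eq_X {p : ℕ} [Fact p.Prime] {s : Finset (ZMod p × ZMod p)} (hs : 2 ≤ s.card)
    {m : ZMod p} (hm : Set.InjOn (fun x : ZMod p × ZMod p => x.2 + x.1 * m) s)
    {r : (ZMod p)[X]} (hr : ∀ j, s.card ≤ j → r.coeff j = 0)
    (hdvd : (∏ x ∈ s, (X - C (x.2 + x.1 * m))) ∣ X ^ p - r) : r = X := by
  have h1 : (∏ x ∈ s, (X - C (x.2 + x.1 * m))) ∣ (X ^ p - X : (ZMod p)[X]) := by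
    refine Finset.prod_dvd_of_coprime ?_ fun x _ => ?_
    · intro x hx y hy hxy
      exact isCoprime_X_sub_C_of_isUnit_sub
        (sub_ne_zero.2 fun h => hxy (hm hx hy h)).isUnit
    · rw [dvd_iff_isRoot]; simp [IsRoot]
  have h2 : (∏ x ∈ s, (X - C (x.2 + x.1 * m))) ∣ r - X := by
    have := dvd_sub h1 hdvd
    rwa [sub_sub_sub_cancel_left] at this
  refine sub_eq_zero.1 (eq_zero_of_dvd_of_degree_lt h2 ?_)
  rw [degree_prod]
  simp only [degree_X_sub_C, Finset.sum_const, nsmul_eq_mul, mul_one]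
  rw [degree_lt_iff_coeff_zero]
  intro j hj
  rw [coeff_sub, hr j hj, coeff_X, if_neg (by omega), sub_zero]

open Polynomial in
/-- The derivative step: a polynomial close to `X ^ p` that vanishes to order `n` at each of at
least two points leaves a remainder of degree greater than `|A| * (n - 1)`. -/
lemma card_mul_le_of_dvd {p : ℕ} [Fact p.Prime] {A : Finset (ZMod p)} (hA : 2 ≤ A.card)
    {n e : ℕ} (hn : 0 < n) {r : (ZMod p)[X]} (hr : ∀ j, p ≤ j → r.coeff j = 0)
    (he : r.natDegree ≤ e + 1) (hdvd : ∀ b ∈ A, (X - C b) ^ n ∣ X ^ p - r) :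
    A.card * (n - 1) ≤ e := by
  have hder : derivative (X ^ p - r) = - derivative r := by
    simp [derivative_X_pow]
  have h1 : (∏ b ∈ A, (X - C b) ^ (n - 1)) ∣ derivative r := by
    refine Finset.prod_dvd_of_coprime ?_ fun b hb => ?_
    · intro x hx y hy hxy
      exact (isCoprime_X_sub_C_of_isUnit_sub (sub_ne_zero.2 hxy).isUnit).pow
    · have := pow_sub_one_dvd_derivative_of_pow_dvd (hdvd b hb)
      rwa [hder, dvd_neg] at this
  have h0 : derivative r ≠ 0 := by
    intro h0
    have hc : r = C (r.coeff 0) := by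
      ext j
      rw [coeff_C]
      split_ifs with hj
      · rw [hj]
      · by_cases hjp : p ≤ j
        · exact hr j hjp
        · obtain ⟨i, rfl⟩ : ∃ i, j = i + 1 := ⟨j - 1, by omega⟩
          have := congrArg (fun q => q.coeff i) h0
          simp only [coeff_derivative, coeff_zero, mul_eq_zero] at this
          refine this.resolve_right fun hz => ?_
          have hz' : ((i + 1 : ℕ) : ZMod p) = 0 := by exact_mod_cast hz
          rw [ZMod.natCast_eq_zero_iff] at hz'
          exact hjp (Nat.le_of_dvd (by omega) hz')
    -- then `b = b ^ p = r` for each `b ∈ A`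
    have hb : ∀ b ∈ A, b = r.coeff 0 := by
      intro b hb
      have h2 : (X - C b) ∣ X ^ p - r := (dvd_pow_self _ hn.ne').trans (hdvd b hb)
      rw [dvd_iff_isRoot, hc] at h2
      simpa [IsRoot, sub_eq_zero] using h2
    obtain ⟨x, hx, y, hy, hxy⟩ := Finset.one_lt_card.1 hA
    exact hxy ((hb x hx).trans (hb y hy).symm)
  have h3 := natDegree_le_of_dvd h1 h0
  rw [natDegree_prod_of_monic _ _ fun b _ => (monic_X_sub_C b).pow _] at h3
  simp only [natDegree_pow, natDegree_X_sub_C, mul_one, Finset.sum_const, smul_eq_mul] at h3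
  have h4 := natDegree_derivative_le r
  omega

/-- Slopes that fail to separate the points of `A × A` are zero or negatives of ratios. -/
lemma injOn_of_notMem_ratios {F : Type*} [Field F] [DecidableEq F] {A : Finset F} {m : F}
    (h0 : m ≠ 0) (hm : -m ∉ ratios A) :
    Set.InjOn (fun x : F × F => x.2 + x.1 * m) (A ×ˢ A : Finset (F × F)) := by
  rintro ⟨a, b⟩ hx ⟨a', b'⟩ hy h
  simp only [Finset.coe_product, Set.mem_prod, Finset.mem_coe] at hx hy h
  by_cases haa : a = a'
  · subst haa
    simpa using h
  · have hbb : b ≠ b' := by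
      rintro rfl
      exact haa (mul_right_cancel₀ h0 (add_left_cancel h))
    refine absurd ?_ hm
    refine Finset.mem_image.2 ⟨((b, b'), (a, a')), ?_, ?_⟩
    · simp [hx.1, hx.2, hy.1, hy.2, haa, hbb]
    · have := sub_ne_zero.2 haa
      simp only
      field_simp
      linear_combination h

open Polynomial in
/-- `A × A` determines at least `n (n - 1)` directions besides the horizontal and vertical one. -/
lemma card_mul_pred_le_card_ratios {p : ℕ} [Fact p.Prime] {A : Finset (ZMod p)}
    (hA : 2 ≤ A.card) (hA2 : A.card ^ 2 < p) :
    A.card * (A.card - 1) ≤ (ratios A).card := by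
  set s := A ×ˢ A with hs
  have hscard : s.card = A.card ^ 2 := by rw [hs, Finset.card_product, sq]
  have hs2 : 2 ≤ s.card := by rw [hscard]; nlinarith
  let g : ZMod p × ZMod p → (ZMod p)[X] := fun x => C x.2 + C x.1 * X
  let R : (ZMod p)[X][X] := ∏ x ∈ s, (X - C (g x))
  have hRm : R.Monic := monic_prod_of_monic _ _ fun x _ => monic_X_sub_C _
  have hRd : R.natDegree = s.card := by
    simp only [R]
    rw [natDegree_prod_of_monic _ _ fun x _ => monic_X_sub_C _]
    simp
  have hRw : WeightLE s.card R := by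
    refine weightLE_prod _ _ fun x _ => weightLE_X.sub (weightLE_C fun i hi => ?_)
    have h1 : i ≠ 0 := by omega
    have h2 : 1 ≠ i := by omega
    simp [g, coeff_C, coeff_X, h1, h2]
  obtain ⟨r, hr1, hr2, hr3⟩ := exists_rem_weightLE (by omega) hRm hRd hRw p
  have hmap : ∀ m : ZMod p, (∏ x ∈ s, (X - C (x.2 + x.1 * m))) ∣
      X ^ p - r.map (evalRingHom m) := by
    intro m
    have := Polynomial.map_dvd (evalRingHom m) hr3
    simpa [R, g, Polynomial.map_prod] using this
  let M : Finset (ZMod p) := Finset.univ \ insert 0 ((ratios A).image fun q => -q)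
  have hM : p ≤ M.card + ((ratios A).card + 1) := by
    have h1 := Finset.le_card_sdiff (insert 0 ((ratios A).image fun q => -q))
      (Finset.univ : Finset (ZMod p))
    have h2 := Finset.card_insert_le (0 : ZMod p) ((ratios A).image fun q => -q)
    have h3 := Finset.card_image_le (s := ratios A) (f := fun q => -q)
    rw [Finset.card_univ, ZMod.card] at h1
    simp only [M]
    omega
  have hvan : ∀ j, (ratios A).card + 1 < j → r.coeff j = 0 := by
    intro j hj
    by_cases hjp : p < j
    · ext i
      exact hr2 j i (by omega)
    refine eq_zero_of_natDegree_lt_card_of_eval_eq_zero' _ M (fun m hm => ?_) ?_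
    · simp only [M, Finset.mem_sdiff, Finset.mem_univ, true_and, Finset.mem_insert, not_or,
        Finset.mem_image, not_exists, not_and] at hm
      have h := rem_eq_X hs2 (injOn_of_notMem_ratios hm.1 fun h => hm.2 _ h (neg_neg m))
        (fun j hj => by rw [coeff_map, hr1 j hj, map_zero]) (hmap m)
      have := congrArg (fun q => q.coeff j) h
      rw [coeff_map, coeff_X, if_neg (by omega)] at this
      simpa using this
    · have : (r.coeff j).natDegree ≤ p - j :=
        natDegree_le_iff_coeff_eq_zero.2 fun i hi => hr2 j i (by omega)
      omega
  refine card_mul_le_of_dvd hA (n := A.card) (by omega)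
    (r := r.map (evalRingHom 0)) (fun j hj => ?_) ?_ fun b hb => ?_
  · rw [coeff_map, hr1 j (by omega), map_zero]
  · refine natDegree_le_iff_coeff_eq_zero.2 fun j hj => ?_
    rw [coeff_map, hvan j hj, map_zero]
  · refine dvd_trans ?_ (hmap 0)
    rw [hs, Finset.prod_product]
    rw [← Finset.prod_const]
    refine Finset.prod_dvd_prod_of_dvd _ _ fun a _ => ?_
    simpa using Finset.dvd_prod_of_mem (fun b => X - C b) hb

/-! ### Collisions and the sum of two dilates -/

/-- Cauchy-Schwarz: a map with few collisions has a large image. -/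
lemma card_sq_le_card_mul_collisions {α β : Type*} [DecidableEq β] (s : Finset α) (f : α → β) :
    s.card ^ 2 ≤ (s.image f).card * ((s ×ˢ s).filter fun x => f x.1 = f x.2).card := by
  have h1 : s.card = ∑ y ∈ s.image f, (s.filter fun x => f x = y).card :=
    Finset.card_eq_sum_card_fiberwise fun x hx => Finset.mem_image_of_mem f hx
  have h2 : ((s ×ˢ s).filter fun x => f x.1 = f x.2).card =
      ∑ y ∈ s.image f, (s.filter fun x => f x = y).card ^ 2 := by
    rw [Finset.card_eq_sum_card_fiberwise (f := fun x => f x.1) (t := s.image f)]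
    · refine Finset.sum_congr rfl fun y _ => ?_
      rw [sq, ← Finset.card_product]
      congr 1
      ext x
      simp only [Finset.mem_filter, Finset.mem_product]
      grind
    · intro x hx
      simp only [Finset.coe_filter, Finset.mem_product, Set.mem_ofPred_eq] at hx
      exact Finset.mem_image_of_mem f hx.1.1
  rw [h2]
  calc s.card ^ 2 = (∑ y ∈ s.image f, (s.filter fun x => f x = y).card) ^ 2 := by rw [← h1]
    _ ≤ _ := sq_sum_le_card_mul_sum_sq

/-- The nontrivial collisions of `(α, β) ↦ l * α + m * β` on `A × A` inject into the
representations of `l / m` as a ratio of differences. -/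
lemma card_collisions_le {F : Type*} [Field F] [DecidableEq F] (A : Finset F) {l m : F}
    (hl : l ≠ 0) (hm : m ≠ 0) :
    (((A ×ˢ A) ×ˢ (A ×ˢ A)).filter
      fun x => l * x.1.1 + m * x.1.2 = l * x.2.1 + m * x.2.2).card ≤
    A.card ^ 2 + ((A.offDiag ×ˢ A.offDiag).filter
      fun x => (x.1.1 - x.1.2) / (x.2.1 - x.2.2) = l / m).card := by
  rw [sq, ← Finset.card_product, ← Finset.diag_card (A ×ˢ A),
    ← Finset.card_image_of_injective ((A.offDiag ×ˢ A.offDiag).filter _)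
      (f := fun x : (F × F) × (F × F) => ((x.2.1, x.1.2), (x.2.2, x.1.1)))
      (by rintro ⟨⟨a, b⟩, c, d⟩ ⟨⟨a', b'⟩, c', d'⟩ h; simp at h ⊢; tauto)]
  refine (Finset.card_le_card ?_).trans (Finset.card_union_le _ _)
  rintro ⟨⟨a, b⟩, c, d⟩ hx
  simp only [Finset.mem_filter, Finset.mem_product] at hx
  obtain ⟨⟨⟨ha, hb⟩, hc, hd⟩, h⟩ := hx
  rw [Finset.mem_union]
  by_cases hac : a = c
  · subst hac
    have : b = d := mul_left_cancel₀ hm (add_left_cancel h)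
    subst this
    left
    simp [ha, hb]
  · right
    have hdb : d ≠ b := by
      rintro rfl
      exact hac (mul_left_cancel₀ hl (add_right_cancel h))
    refine Finset.mem_image.2 ⟨((d, b), (a, c)), ?_, rfl⟩
    simp only [Finset.mem_filter, Finset.mem_product, Finset.mem_offDiag]
    refine ⟨⟨⟨hd, hb, hdb⟩, ha, hc, hac⟩, ?_⟩
    have := sub_ne_zero.2 hac
    field_simp
    linear_combination -h

/-- Corollary 3: if `|A| ≥ 2` and `|A|² < p`, there are `a,b,c,d ∈ A` with `a ≠ b`,
`c ≠ d` such that `|(a-b)A + (c-d)A| ≥ |A|³/(2|A|-1)`. -/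
theorem dilate_sumset_lower_bound (p : ℕ) (hp : p.Prime) (A : Finset (ZMod p))
    (hA : 2 ≤ A.card) (hA2 : A.card ^ 2 < p) :
    ∃ a ∈ A, ∃ b ∈ A, ∃ c ∈ A, ∃ d ∈ A, a ≠ b ∧ c ≠ d ∧
      (A.card : ℝ) ^ 3 / (2 * (A.card : ℝ) - 1) ≤
        ({x : ZMod p | ∃ α ∈ A, ∃ β ∈ A, x = (a - b) * α + (c - d) * β}.ncard : ℝ) := by
  have : Fact p.Prime := ⟨hp⟩
  have hQ := card_mul_pred_le_card_ratios hA hA2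
  have hoff : A.offDiag.card = A.card * (A.card - 1) := by
    rw [Finset.offDiag_card, Nat.mul_sub, mul_one]
  have hpos : 0 < A.card * (A.card - 1) := Nat.mul_pos (by omega) (by omega)
  obtain ⟨q, hq, hN⟩ := Finset.exists_card_fiber_le_of_card_le_mul
    (s := A.offDiag ×ˢ A.offDiag) (t := ratios A)
    (f := fun x => (x.1.1 - x.1.2) / (x.2.1 - x.2.2)) (n := A.card * (A.card - 1))
    (Finset.card_pos.1 (hpos.trans_le hQ))
    (by rw [Finset.card_product, hoff]; exact Nat.mul_le_mul_right _ hQ)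
  obtain ⟨⟨⟨a, b⟩, c, d⟩, hx, rfl⟩ := Finset.mem_image.1 hq
  simp only [Finset.mem_product, Finset.mem_offDiag] at hx
  obtain ⟨⟨ha, hb, hab⟩, hc, hd, hcd⟩ := hx
  refine ⟨a, ha, b, hb, c, hc, d, hd, hab, hcd, ?_⟩
  have hset : {x : ZMod p | ∃ α ∈ A, ∃ β ∈ A, x = (a - b) * α + (c - d) * β} =
      ((A ×ˢ A).image fun x => (a - b) * x.1 + (c - d) * x.2 : Finset (ZMod p)) := by
    ext x
    simp only [Set.mem_ofPred_eq, Finset.coe_image, Set.mem_image, Finset.mem_coe,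
      Finset.mem_product, Prod.exists]
    grind
  rw [hset, Set.ncard_coe_finset]
  have h1 := card_sq_le_card_mul_collisions (A ×ˢ A)
    fun x : ZMod p × ZMod p => (a - b) * x.1 + (c - d) * x.2
  have h2 := (card_collisions_le A (sub_ne_zero.2 hab) (sub_ne_zero.2 hcd)).trans
    (Nat.add_le_add_left hN _)
  have h3 := h1.trans (Nat.mul_le_mul_left _ h2)
  rw [Finset.card_product] at h3
  generalize ((A ×ˢ A).image fun x : ZMod p × ZMod p => (a - b) * x.1 + (c - d) * x.2).card = S
    at h3 ⊢
  have h4 : ((A.card : ℝ) * A.card) ^ 2 ≤ S * ((A.card : ℝ) ^ 2 + A.card * (A.card - 1)) := by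
    have h5 : ((A.card - 1 : ℕ) : ℝ) = A.card - 1 := by
      rw [Nat.cast_sub (by omega), Nat.cast_one]
    rw [← h5]
    exact_mod_cast h3
  have hn : (2 : ℝ) ≤ A.card := by exact_mod_cast hA
  rw [div_le_iff₀ (by linarith)]
  refine le_of_mul_le_mul_left ?_ (by linarith : (0 : ℝ) < A.card)
  linarith
end

section
/- Let p be a prime and let A, B ⊆ GF(p) be disjoint sets with |A| = m, |B| = n, m ≥ n ≥ 2, and m² + n² < p. Then the point set U = (A × A) ∪ (B × B) ⊆ AG(2,p) determines at least n² + mn − 2n + 2 directions. -/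
/-!
The proof is the Rédei–Szőnyi polynomial method. For a point set `U` of size `k` let
`R(x, y) = ∏ (x - (b - a y))`, the product over `(a, b) ∈ U`, and let `g(x, y)` be the remainder of
`x ^ p` modulo `R`, as polynomials in `x` (`exists_remainder`). If `d` is not a determined
direction, the numbers `b - a d` are distinct, so `R(x, d)` divides `x ^ p - x` and hence
`g(x, d) = x`. Since `g` has total degree at most `p`, the coefficient of `x ^ j` in `g` has degree
at most `p - j` in `y`; for `j ≥ 2` it vanishes at every undetermined `d`, of which there are at
least `p - N + 1` when `U` determines `N` directions including `∞`. So this coefficient is zero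
for `j ≥ N` (`exists_lacunary`).

Now put `y = 0`. The polynomial `x ^ p - g(x, 0)` vanishes at each `b` to order at least the number
of points of `U` on the horizontal line of height `b`, so its derivative `-g'(x, 0)` vanishes there
to order one less. For the union of grids this gives `deg g' ≥ m (m - 1) + n (n - 1)`, unless
`g' = 0`; in that case `g` is constant, which is impossible because `g(b) = b ^ p = b` for all
`b ∈ A`. Hence `N ≥ m ^ 2 + n ^ 2 - m - n + 2`, which exceeds the required bound by
`(m - n) (m - 1)`.
-/

/-- The set of directions (elements of `GF(p) ∪ {∞}`, encoded as `Option (ZMod p)`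
with `none = ∞`) determined by a point set `U ⊆ AG(2,p) = (ZMod p)²`. -/
def dirSet (p : ℕ) (U : Set (ZMod p × ZMod p)) : Set (Option (ZMod p)) :=
  {d | ∃ P ∈ U, ∃ Q ∈ U, P ≠ Q ∧
    ((P.1 = Q.1 ∧ d = none) ∨ (P.1 ≠ Q.1 ∧ d = some ((P.2 - Q.2) * (P.1 - Q.1)⁻¹)))}

open Polynomial

/-- The bivariate polynomial `P(x, y)`, encoded in `F[y][x]` (the outer variable is `x`), has total
degree at most `n`. -/
def TotalDegLE {F : Type*} [CommRing F] (n : ℕ) (P : F[X][X]) : Prop :=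
  ∀ i j, n < i + j → (P.coeff j).coeff i = 0

lemma TotalDegLE.mul {F : Type*} [CommRing F] {n m : ℕ} {P Q : F[X][X]}
    (hP : TotalDegLE n P) (hQ : TotalDegLE m Q) : TotalDegLE (n + m) (P * Q) := by
  intro i j hij
  rw [coeff_mul, finsetSum_coeff]
  refine Finset.sum_eq_zero fun s hs => ?_
  rw [coeff_mul]
  refine Finset.sum_eq_zero fun t ht => ?_
  rw [Finset.HasAntidiagonal.mem_antidiagonal] at hs ht
  by_cases h : n < t.1 + s.1
  · rw [hP _ _ h, zero_mul]
  · rw [hQ t.2 s.2 (by omega), mul_zero]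

lemma TotalDegLE.sub {F : Type*} [CommRing F] {n : ℕ} {P Q : F[X][X]}
    (hP : TotalDegLE n P) (hQ : TotalDegLE n Q) : TotalDegLE n (P - Q) := by
  intro i j hij
  rw [coeff_sub, coeff_sub, hP i j hij, hQ i j hij, sub_zero]

lemma totalDegLE_one {F : Type*} [CommRing F] : TotalDegLE 0 (1 : F[X][X]) := by
  intro i j hij
  rw [coeff_one]
  split_ifs with h
  · rw [coeff_one, if_neg (by omega)]
  · simp

lemma totalDegLE_X {F : Type*} [CommRing F] : TotalDegLE 1 (X : F[X][X]) := by
  intro i j hij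
  rw [coeff_X]
  split_ifs with h
  · rw [coeff_one, if_neg (by omega)]
  · simp

lemma totalDegLE_C {F : Type*} [CommRing F] {n : ℕ} {q : F[X]} (h : ∀ i, n < i → q.coeff i = 0) :
    TotalDegLE n (C q) := by
  intro i j hij
  rw [coeff_C]
  split_ifs with hj
  · exact h i (by omega)
  · simp

/-- The Rédei polynomial `∏ (x - (b - a y))` over the points `(a, b)` of `U`, in `F[y][x]`. -/
noncomputable def redei {F : Type*} [CommRing F] (U : Finset (F × F)) : F[X][X] :=
  ∏ P ∈ U, (X - C (C P.2 - C P.1 * X))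

lemma redei_totalDegLE {F : Type*} [CommRing F] (U : Finset (F × F)) :
    TotalDegLE U.card (redei U) := by
  classical
  induction U using Finset.induction_on with
  | empty => simpa [redei] using totalDegLE_one
  | insert P U hP ih =>
    rw [redei, Finset.prod_insert hP, Finset.card_insert_of_notMem hP, add_comm]
    refine TotalDegLE.mul (totalDegLE_X.sub (totalDegLE_C fun i hi => ?_)) ih
    rw [coeff_sub, coeff_C, if_neg (by omega), coeff_C_mul, coeff_X, if_neg (by omega)]
    simp

lemma redei_monic {F : Type*} [CommRing F] (U : Finset (F × F)) : (redei U).Monic :=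
  monic_prod_X_sub_C _ _

lemma redei_natDegree {F : Type*} [CommRing F] [Nontrivial F] (U : Finset (F × F)) :
    (redei U).natDegree = U.card := natDegree_finsetProd_X_sub_C_eq_card _ _

lemma redei_map {F : Type*} [CommRing F] (U : Finset (F × F)) (d : F) :
    (redei U).map (evalRingHom d) = ∏ P ∈ U, (X - C (P.2 - P.1 * d)) := by
  rw [redei, Polynomial.map_prod]
  simp

/-- The remainder of `x ^ n` on division by a monic polynomial in `x` of total degree `k` and
`x`-degree `k` has total degree at most `n`. -/
lemma exists_remainder {F : Type*} [CommRing F] {k : ℕ} (hk : 2 ≤ k) {R : F[X][X]}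
    (hR : R.Monic) (hdeg : R.natDegree = k) (hW : TotalDegLE k R) (n : ℕ) :
    ∃ g : F[X][X], R ∣ X ^ n - g ∧ (∀ j, k ≤ j → g.coeff j = 0) ∧ TotalDegLE n g := by
  induction n with
  | zero =>
    refine ⟨1, by simp, fun j hj => ?_, totalDegLE_one⟩
    rw [coeff_one, if_neg (by omega)]
  | succ n ih =>
    obtain ⟨g, hd, hg, hgW⟩ := ih
    refine ⟨X * g - C (g.coeff (k - 1)) * R, ?_, ?_, ?_⟩
    · have : X ^ (n + 1) - (X * g - C (g.coeff (k - 1)) * R)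
          = X * (X ^ n - g) + C (g.coeff (k - 1)) * R := by ring
      rw [this]
      exact dvd_add (hd.mul_left _) (dvd_mul_left _ _)
    · intro j hj
      obtain ⟨j, rfl⟩ : ∃ i, j = i + 1 := ⟨j - 1, by omega⟩
      rw [coeff_sub, coeff_X_mul, coeff_C_mul]
      rcases hj.eq_or_lt with h | h
      · have h1 : R.coeff (j + 1) = 1 := by rw [← h, ← hdeg]; exact hR
        have h2 : k - 1 = j := by omega
        rw [h1, h2]; ring
      · rw [hg j (by omega), coeff_eq_zero_of_natDegree_lt (p := R) (by omega)]; ring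
    · refine TotalDegLE.sub ?_ ?_
      · rw [add_comm]; exact totalDegLE_X.mul hgW
      · by_cases h : k ≤ n + 1
        · have e : n + 1 = (n + 1 - k) + k := by omega
          rw [e]
          exact (totalDegLE_C fun i hi => hgW i (k - 1) (by omega)).mul hW
        · have : g.coeff (k - 1) = 0 := by
            ext i
            rw [hgW i (k - 1) (by omega), coeff_zero]
          rw [this]
          intro i j _
          simp

lemma injOn_of_notMem_dirSet {p : ℕ} [Fact p.Prime] {U : Finset (ZMod p × ZMod p)} {d : ZMod p}
    (hd : some d ∉ dirSet p (U : Set (ZMod p × ZMod p))) :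
    Set.InjOn (fun P : ZMod p × ZMod p => P.2 - P.1 * d) U := by
  intro P hP Q hQ h
  by_contra hne
  simp only at h
  refine hd ⟨P, hP, Q, hQ, hne, ?_⟩
  by_cases h1 : P.1 = Q.1
  · exact absurd (Prod.ext h1 (by rw [h1] at h; exact sub_left_injective h)) hne
  · refine Or.inr ⟨h1, ?_⟩
    have h2 : P.1 - Q.1 ≠ 0 := sub_ne_zero.mpr h1
    rw [Option.some_inj, eq_mul_inv_iff_mul_eq₀ h2]
    linear_combination -h

/-- At an undetermined direction the remainder of `x ^ p` modulo the Rédei polynomial is `x`. -/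
lemma remainder_eq_X {p : ℕ} [Fact p.Prime] {U : Finset (ZMod p × ZMod p)} (hU : 2 ≤ U.card)
    {d : ZMod p} (hd : some d ∉ dirSet p (U : Set (ZMod p × ZMod p))) {g : (ZMod p)[X]}
    (hdvd : ∏ P ∈ U, (X - C (P.2 - P.1 * d)) ∣ X ^ p - g)
    (hg : ∀ j, U.card ≤ j → g.coeff j = 0) : g = X := by
  have h1 : ∏ P ∈ U, (X - C (P.2 - P.1 * d)) ∣ (X ^ p - X : (ZMod p)[X]) := by
    refine Finset.prod_dvd_of_coprime (fun P hP Q hQ hne => ?_) (fun P _ => ?_)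
    · refine isCoprime_X_sub_C_of_isUnit_sub (IsUnit.mk0 _ (sub_ne_zero.mpr fun h => hne ?_))
      exact injOn_of_notMem_dirSet hd hP hQ h
    · rw [dvd_iff_isRoot]
      simp
  have h2 : ∏ P ∈ U, (X - C (P.2 - P.1 * d)) ∣ g - X := by
    have := dvd_sub h1 hdvd
    rwa [sub_sub_sub_cancel_left] at this
  refine sub_eq_zero.mp (eq_zero_of_dvd_of_natDegree_lt h2 ?_)
  rw [natDegree_finsetProd_X_sub_C_eq_card]
  refine lt_of_le_of_lt (natDegree_le_iff_coeff_eq_zero (n := U.card - 1) |>.mpr ?_)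
    (by omega : U.card - 1 < U.card)
  intro j hj
  rw [coeff_sub, hg j (by omega), coeff_X, if_neg (by omega), sub_zero]

/-- Undetermined finite directions number at least `p + 1 - N`, where `N` counts the determined
directions and `∞` is among them. -/
lemma card_undetermined {p : ℕ} [Fact p.Prime] (D : Set (Option (ZMod p))) (h : none ∈ D)
    [DecidablePred fun d : ZMod p => some d ∉ D] :
    p + 1 ≤ D.ncard + (Finset.univ.filter fun d : ZMod p => some d ∉ D).card := by
  classical
  have h1 := Finset.card_filter_add_card_filter_not (s := (Finset.univ : Finset (ZMod p)))
    (fun d => some d ∉ D)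
  rw [Finset.card_univ, ZMod.card] at h1
  set bad := Finset.univ.filter fun d : ZMod p => ¬ (some d ∉ D) with hbad
  have h2 : (Finset.insertNone bad).card ≤ D.ncard := by
    rw [← Set.ncard_coe_finset]
    refine Set.ncard_le_ncard ?_ (Set.toFinite _)
    intro o ho
    rcases o with _ | d
    · exact h
    · simpa [hbad] using ho
  rw [Finset.card_insertNone] at h2
  omega

/-- Rédei–Szőnyi: if `U` determines `N` directions, `∞` among them, then `x ^ p` is congruent to a
polynomial of degree less than `max N 2` and less than `|U|`, modulo the product of `x - b` over the
points `(a, b)` of `U`. -/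
lemma exists_lacunary {p : ℕ} [Fact p.Prime] {U : Finset (ZMod p × ZMod p)} (hU : 2 ≤ U.card)
    (hinf : none ∈ dirSet p (U : Set (ZMod p × ZMod p))) :
    ∃ g : (ZMod p)[X], ∏ P ∈ U, (X - C P.2) ∣ X ^ p - g ∧
      (∀ j, U.card ≤ j → g.coeff j = 0) ∧
      ∀ j, 2 ≤ j → (dirSet p (U : Set (ZMod p × ZMod p))).ncard ≤ j → g.coeff j = 0 := by
  classical
  obtain ⟨g, hd, hg, hW⟩ :=
    exists_remainder hU (redei_monic U) (redei_natDegree U) (redei_totalDegLE U) p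
  have hspec : ∀ d, ∏ P ∈ U, (X - C (P.2 - P.1 * d)) ∣ X ^ p - g.map (evalRingHom d) := by
    intro d
    have := Polynomial.map_dvd (evalRingHom d) hd
    rw [redei_map] at this
    simpa using this
  have hcoeff : ∀ d j, U.card ≤ j → (g.map (evalRingHom d)).coeff j = 0 := by
    intro d j hj
    rw [coeff_map, hg j hj, map_zero]
  refine ⟨g.map (evalRingHom 0), by simpa using hspec 0, hcoeff 0, fun j hj hN => ?_⟩
  suffices h : g.coeff j = 0 by rw [coeff_map, h, map_zero]
  by_cases hjp : p < j
  · ext i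
    rw [hW i j (by omega), coeff_zero]
  refine eq_zero_of_natDegree_lt_card_of_eval_eq_zero' _
    (Finset.univ.filter fun d : ZMod p => some d ∉ dirSet p (U : Set (ZMod p × ZMod p)))
    (fun d hdm => ?_) ?_
  · have hX := remainder_eq_X hU (Finset.mem_filter.mp hdm).2 (hspec d) (hcoeff d)
    have := congrArg (fun q => q.coeff j) hX
    simpa [coeff_X, show 1 ≠ j by omega] using this
  · have hc := card_undetermined _ hinf
    refine lt_of_le_of_lt (natDegree_le_iff_coeff_eq_zero (n := p - j) |>.mpr fun i hi => ?_)
      (by omega : p - j < _)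
    exact hW i j (by omega)

/-- If `x ^ p - g` vanishes to order at least `e b` at each `b ∈ S`, where `S` has at least two
elements and `g` has degree less than `p`, then `deg g` exceeds the sum of the `e b - 1`. -/
lemma sum_lt_natDegree {p : ℕ} [Fact p.Prime] {S : Finset (ZMod p)} {e : ZMod p → ℕ}
    {g : (ZMod p)[X]} (hS : 1 < S.card) (he : ∀ b ∈ S, 1 ≤ e b) (hgp : g.natDegree < p)
    (hdvd : ∀ b ∈ S, (X - C b) ^ e b ∣ X ^ p - g) :
    ∑ b ∈ S, (e b - 1) < g.natDegree := by
  have hroot : ∀ b ∈ S, g.eval b = b := by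
    intro b hb
    have h := (dvd_pow_self (X - C b) (by have := he b hb; omega : e b ≠ 0)).trans (hdvd b hb)
    rw [dvd_iff_isRoot, IsRoot.def] at h
    simp only [eval_sub, eval_pow, eval_X, ZMod.pow_card] at h
    exact (sub_eq_zero.mp h).symm
  have hpos : g.natDegree ≠ 0 := by
    intro h0
    obtain ⟨a, ha, b, hb, hab⟩ := Finset.one_lt_card.mp hS
    rw [eq_C_of_natDegree_eq_zero h0] at hroot
    have h1 := hroot a ha
    have h2 := hroot b hb
    rw [eval_C] at h1 h2
    exact hab (h1.symm.trans h2)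
  have hder : derivative g ≠ 0 := by
    intro h0
    -- The top coefficient of the derivative is `deg g` times that of `g`, and `0 < deg g < p`.
    have h1 := congrArg (fun q => q.coeff (g.natDegree - 1)) h0
    simp only [coeff_derivative, coeff_zero] at h1
    rw [Nat.sub_add_cancel (by omega : 1 ≤ g.natDegree), ← Nat.cast_add_one,
      Nat.sub_add_cancel (by omega : 1 ≤ g.natDegree)] at h1
    rcases mul_eq_zero.mp h1 with h | h
    · rw [coeff_natDegree, leadingCoeff_eq_zero] at h
      simp [h] at hpos
    · rw [ZMod.natCast_eq_zero_iff] at h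
      exact absurd (Nat.le_of_dvd (by omega) h) (by omega)
  have hprod : ∏ b ∈ S, (X - C b) ^ (e b - 1) ∣ derivative g := by
    refine Finset.prod_dvd_of_coprime (fun a _ b _ hab => ?_) (fun b hb => ?_)
    · exact (isCoprime_X_sub_C_of_isUnit_sub (IsUnit.mk0 _ (sub_ne_zero.mpr hab))).pow
    · have h := pow_sub_one_dvd_derivative_of_pow_dvd (hdvd b hb)
      simpa [derivative_X_pow, CharP.cast_eq_zero] using h
  have hdeg := natDegree_le_of_dvd hprod hder
  rw [natDegree_prod_of_monic _ _ fun b _ => (monic_X_sub_C b).pow _] at hdeg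
  simp only [natDegree_pow, natDegree_X_sub_C, mul_one] at hdeg
  exact lt_of_le_of_lt hdeg (natDegree_derivative_lt hpos)

/-- The union of grids `(A × A) ∪ (B × B)` with `A, B` disjoint, `|A| = m ≥ |B| = n ≥ 2`
and `m² + n² < p`, determines at least `n² + mn - 2n + 2` directions. -/
theorem directions_of_union_of_grids (p m n : ℕ) (hp : p.Prime)
    (A B : Finset (ZMod p)) (hdisj : Disjoint A B)
    (hm : A.card = m) (hn : B.card = n) (hmn : n ≤ m) (hn2 : 2 ≤ n)
    (hlt : m ^ 2 + n ^ 2 < p) :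
    n ^ 2 + m * n - 2 * n + 2 ≤
      (dirSet p ({P | P.1 ∈ A ∧ P.2 ∈ A} ∪ {P | P.1 ∈ B ∧ P.2 ∈ B})).ncard := by
  classical
  have : Fact p.Prime := ⟨hp⟩
  set U : Finset (ZMod p × ZMod p) := A ×ˢ A ∪ B ×ˢ B with hUdef
  have hUset : ({P | P.1 ∈ A ∧ P.2 ∈ A} ∪ {P | P.1 ∈ B ∧ P.2 ∈ B} : Set (ZMod p × ZMod p)) = U := by
    ext P
    simp [hUdef]
  rw [hUset]
  have hUle : U.card ≤ m ^ 2 + n ^ 2 := by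
    refine (Finset.card_union_le _ _).trans (le_of_eq ?_)
    rw [Finset.card_product, Finset.card_product, hm, hn]; ring
  have hinf : none ∈ dirSet p (U : Set (ZMod p × ZMod p)) := by
    obtain ⟨a, ha, b, hb, hab⟩ := Finset.one_lt_card.mp (by omega : 1 < A.card)
    refine ⟨(a, a), by simp [hUdef, ha], (a, b), by simp [hUdef, ha, hb], ?_, Or.inl ⟨rfl, rfl⟩⟩
    simpa using hab
  have hU2 : 2 ≤ U.card := by
    have h : (A ×ˢ A).card ≤ U.card := Finset.card_le_card Finset.subset_union_left
    rw [Finset.card_product, hm] at h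
    nlinarith
  obtain ⟨g, hdvd, hgU, hgN⟩ := exists_lacunary hU2 hinf
  have hgp : g.natDegree < p := by
    refine lt_of_le_of_lt (natDegree_le_iff_coeff_eq_zero (n := U.card) |>.mpr fun j hj => ?_)
      (by omega : U.card < p)
    exact hgU j hj.le
  have hfib : ∀ T : Finset (ZMod p), T ×ˢ T ⊆ U → ∀ b ∈ T, (X - C b) ^ T.card ∣ X ^ p - g := by
    intro T hT b hb
    refine dvd_trans ?_ hdvd
    have h : T ×ˢ {b} ⊆ U :=
      (Finset.product_subset_product_right (Finset.singleton_subset_iff.mpr hb)).trans hT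
    have := Finset.prod_dvd_prod_of_subset _ _ (fun P : ZMod p × ZMod p => X - C P.2) h
    simpa [Finset.prod_product] using this
  have hBA : ∀ b ∈ B, b ∉ A := fun b hb ha => Finset.disjoint_left.mp hdisj ha hb
  have hsum := sum_lt_natDegree (S := A ∪ B) (e := fun b => if b ∈ A then m else n) (g := g)
    (lt_of_lt_of_le (by omega) (Finset.card_le_card Finset.subset_union_left))
    (fun b _ => by split_ifs <;> omega) hgp
    (fun b hb => by
      split_ifs with h
      · rw [← hm]; exact hfib A Finset.subset_union_left b h
      · rw [← hn]
        exact hfib B Finset.subset_union_right b ((Finset.mem_union.mp hb).resolve_left h))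
  rw [Finset.sum_union hdisj, Finset.sum_congr rfl (fun b hb => by rw [if_pos hb]),
    Finset.sum_congr (s₁ := B) rfl (fun b hb => by rw [if_neg (hBA b hb)]),
    Finset.sum_const, Finset.sum_const, hm, hn, smul_eq_mul, smul_eq_mul] at hsum
  have hN : g.natDegree < (dirSet p (U : Set (ZMod p × ZMod p))).ncard := by
    by_contra! hle
    have h2 : 2 ≤ g.natDegree := by
      have : 1 ≤ n * (n - 1) := Nat.mul_pos (by omega) (by omega)
      omega
    have h0 := hgN _ h2 hle
    rw [coeff_natDegree, leadingCoeff_eq_zero] at h0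
    simp [h0] at h2
  have key : n ^ 2 + m * n - 2 * n ≤ m * (m - 1) + n * (n - 1) := by
    obtain ⟨c, rfl⟩ : ∃ c, n = c + 1 := ⟨n - 1, by omega⟩
    obtain ⟨t, rfl⟩ : ∃ t, m = c + 1 + t := ⟨m - (c + 1), by omega⟩
    rw [Nat.sub_le_iff_le_add, Nat.add_sub_cancel, show c + 1 + t - 1 = c + t by omega]
    nlinarith [Nat.zero_le (t * c), Nat.zero_le (t * t)]
  omega
end
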